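/- The meta MWU algorithm achieves near-optimal ε-quantile regret: there is a universal constant C > 0 such that for every d ≥ 2, T ≥ 1, every loss sequence ℓ_1,…,ℓ_T ∈ [0,1]^d, and every ε ∈ [1/d, 1], the iterates p_t of the algorithm satisfy Reg_ε = Σ_{t=1}^T ⟨p_t, ℓ_t⟩ − Σ_{t=1}^T ℓ_{t,i_ε} ≤ C·(√(T·log(2/ε)) + √(T·(1 + log(1 + log d)))), where i_ε is an expert whose cumulative loss Σ_{t=1}^T ℓ_{t,i} is the ⌈εd⌉-th smallest among the d experts. -/

import Mathlib

open Finset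

/-- The binary row-stochastic matrix associated with a map `f : [d] → [d]`. -/
def toMat (d : ℕ) (f : Fin d → Fin d) : Matrix (Fin d) (Fin d) ℝ :=
  fun i j => if f i = j then 1 else 0

/-- The set `Φ_b` of binary row-stochastic `d × d` matrices. -/
noncomputable def PhiB (d : ℕ) : Finset (Matrix (Fin d) (Fin d) ℝ) := by
  classical exact Finset.image (toMat d) Finset.univ

/-- A matrix is row-stochastic if every row lies in the simplex. -/
def RowStochastic {d : ℕ} (φ : Matrix (Fin d) (Fin d) ℝ) : Prop :=
  ∀ i, (∀ j, 0 ≤ φ i j) ∧ ∑ j, φ i j = 1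

/-- A vector lies in the probability simplex `Δ(d)`. -/
def InSimplex (d : ℕ) (p : Fin d → ℝ) : Prop :=
  (∀ i, 0 ≤ p i) ∧ ∑ i, p i = 1

/-- The `ψ`-induced weight of `φ`: `π_ψ(φ) = ∏ i ⟨ψ_{i:}, φ_{i:}⟩`. -/
noncomputable def piInd {d : ℕ} (ψ φ : Matrix (Fin d) (Fin d) ℝ) : ℝ :=
  ∏ i, ∑ j, ψ i j * φ i j

/-- `ψ^k = ((d-2)/(d-1))·1 e_k^T + (1/(d(d-1)))·1 1^T`. -/
noncomputable def psiK (d : ℕ) (k : Fin d) : Matrix (Fin d) (Fin d) ℝ :=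
  fun _ j => ((d : ℝ) - 2) / ((d : ℝ) - 1) * (if j = k then 1 else 0) + 1 / ((d : ℝ) * ((d : ℝ) - 1))

/-- `ψ^{d+1} = ((d-2)/(d-1))·I + (1/(d(d-1)))·1 1^T`. -/
noncomputable def psiSelf (d : ℕ) : Matrix (Fin d) (Fin d) ℝ :=
  fun i j => ((d : ℝ) - 2) / ((d : ℝ) - 1) * (if i = j then 1 else 0) + 1 / ((d : ℝ) * ((d : ℝ) - 1))

/-- The special prior `π = (1/(2d)) Σ_k π_{ψ^k} + (1/2) π_{ψ^{d+1}}`. -/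
noncomputable def priorPi (d : ℕ) (φ : Matrix (Fin d) (Fin d) ℝ) : ℝ :=
  1 / (2 * d) * ∑ k : Fin d, piInd (psiK d k) φ + 1 / 2 * piInd (psiSelf d) φ

/-- `d^self_φ`: the number of indices `i` whose row equals `e_i^T`. -/
noncomputable def dSelf {d : ℕ} (φ : Matrix (Fin d) (Fin d) ℝ) : ℕ :=
  Nat.card {i : Fin d // φ i = fun j => if j = i then (1 : ℝ) else 0}

/-- `d^unif_φ`: the maximum multiplicity in the multiset of rows of `φ`. -/
noncomputable def dUnif {d : ℕ} (φ : Matrix (Fin d) (Fin d) ℝ) : ℕ :=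
  Finset.univ.sup fun i : Fin d => Nat.card {j : Fin d // φ j = φ i}

/-- Complexity measure for binary row-stochastic matrices. -/
noncomputable def cB {d : ℕ} (φ : Matrix (Fin d) (Fin d) ℝ) : ℕ :=
  min (d - dSelf φ) (d - dUnif φ + 1)

/-- `Q_φ`: distributions over `Φ_b` (indexed by maps `f : [d] → [d]`) averaging to `φ`. -/
def QSet (d : ℕ) (φ : Matrix (Fin d) (Fin d) ℝ) : Set ((Fin d → Fin d) → ℝ) :=
  {q | (∀ f, 0 ≤ q f) ∧ (∑ f, q f = 1) ∧ ∀ i j, ∑ f, q f * toMat d f i j = φ i j}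

/-- Extended complexity measure `c_φ = inf_{q ∈ Q_φ} E_{φ'∼q}[c_{φ'}]`. -/
noncomputable def cGen (d : ℕ) (φ : Matrix (Fin d) (Fin d) ℝ) : ℝ :=
  sInf ((fun q => ∑ f : Fin d → Fin d, q f * (cB (toMat d f) : ℝ)) '' QSet d φ)

/-- Matrix inner product `⟨φ, p ℓ^T⟩`. -/
noncomputable def lossInner {d : ℕ} (φ : Matrix (Fin d) (Fin d) ℝ) (p ℓ : Fin d → ℝ) : ℝ :=
  ∑ i, ∑ j, φ i j * (p i * ℓ j)

/-- The mean matrix `E_{f∼q}[φ_f]` of a weight vector over binary matrices. -/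
noncomputable def mixMat (d : ℕ) (q : (Fin d → Fin d) → ℝ) : Matrix (Fin d) (Fin d) ℝ :=
  fun i j => ∑ f, q f * toMat d f i j

/-- KL divergence of `q` (a distribution over `Φ_b`, indexed by maps) from the prior `π`. -/
noncomputable def klPrior (d : ℕ) (q : (Fin d → Fin d) → ℝ) : ℝ :=
  ∑ f, q f * Real.log (q f / priorPi d (toMat d f))

/-- The kernel `K(B,A) = Σ_{φ∈Φ_b} π(φ) Π_{i,j : φ_{ij}=1} B_{ij} A_{ij}`. -/
noncomputable def kernelK (d : ℕ) (B A : Matrix (Fin d) (Fin d) ℝ) : ℝ := by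
  classical exact
    ∑ φ ∈ PhiB d, priorPi d φ * ∏ i, ∏ j, if φ i j = 1 then B i j * A i j else 1

lemma aux_exp_neg {x : ℝ} (hx : 0 ≤ x) : Real.exp (-x) ≤ 1 - x + x ^ 2 / 2 := by
  have h := Real.quadratic_le_exp_of_nonneg hx
  rw [Real.exp_neg]
  rw [inv_le_iff_one_le_mul₀ (Real.exp_pos x)]
  have h2 : 0 ≤ 1 - x + x ^ 2 / 2 := by nlinarith [sq_nonneg (x - 1)]
  nlinarith [mul_le_mul_of_nonneg_left h h2, sq_nonneg (x ^ 2)]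

lemma aux_mwu_inv {ι : Type*} (s : Finset ι) (T : ℕ) (q L : ℕ → ι → ℝ) (η : ℝ) (hη : 0 ≤ η)
    (hL : ∀ t ∈ Finset.Icc 1 T, (∀ i ∈ s, 0 ≤ q t i) → ∑ i ∈ s, q t i = 1 →
      ∀ i ∈ s, 0 ≤ L t i ∧ L t i ≤ 1)
    (hq0 : ∀ i ∈ s, 0 ≤ q 1 i) (hq1 : ∑ i ∈ s, q 1 i = 1)
    (hq : ∀ t ∈ Finset.Icc 1 T, ∀ i ∈ s, q (t + 1) i =
      q t i * Real.exp (-η * L t i) / ∑ j ∈ s, q t j * Real.exp (-η * L t j)) :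
    ∀ n, n ≤ T → (∀ i ∈ s, 0 ≤ q (n + 1) i) ∧ ∑ i ∈ s, q (n + 1) i = 1 ∧
      ∀ i ∈ s, q 1 i * Real.exp (-η * ∑ t ∈ Finset.Icc 1 n, L t i) ≤
        q (n + 1) i * Real.exp (-η * (∑ t ∈ Finset.Icc 1 n, ∑ j ∈ s, q t j * L t j)
          + n * (η ^ 2 / 2)) := by
  intro n
  induction n with
  | zero => intro _; exact ⟨hq0, hq1, by simp⟩
  | succ n ih =>
    intro hn
    obtain ⟨h0, h1, h2⟩ := ih (by omega)
    have hmem : n + 1 ∈ Finset.Icc 1 T := by simp; omega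
    have hL' := hL _ hmem h0 h1
    set z := ∑ j ∈ s, q (n + 1) j * Real.exp (-η * L (n + 1) j) with hz
    have hzpos : 0 < z := by
      have : ∑ j ∈ s, q (n + 1) j * Real.exp (-η) ≤ z := by
        apply Finset.sum_le_sum
        intro j hj
        apply mul_le_mul_of_nonneg_left _ (h0 j hj)
        apply Real.exp_le_exp.2
        nlinarith [(hL' j hj).2]
      rw [← Finset.sum_mul, h1] at this
      have := Real.exp_pos (-η)
      linarith
    have hzle : z ≤ Real.exp (-η * (∑ j ∈ s, q (n + 1) j * L (n + 1) j) + η ^ 2 / 2) := by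
      have h3 : z ≤ ∑ j ∈ s, (q (n + 1) j - η * (q (n + 1) j * L (n + 1) j)
          + q (n + 1) j * (η ^ 2 / 2)) := by
        apply Finset.sum_le_sum
        intro j hj
        obtain ⟨ha, hb⟩ := hL' j hj
        have h4 := aux_exp_neg (mul_nonneg hη ha)
        have h5 : (η * L (n + 1) j) ^ 2 / 2 ≤ η ^ 2 / 2 := by
          have : L (n + 1) j ^ 2 ≤ 1 := by nlinarith
          rw [mul_pow]
          nlinarith [sq_nonneg η]
        have h6 : Real.exp (-η * L (n + 1) j) ≤ 1 - η * L (n + 1) j + η ^ 2 / 2 := by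
          rw [neg_mul]; linarith
        nlinarith [mul_le_mul_of_nonneg_left h6 (h0 j hj)]
      rw [Finset.sum_add_distrib, Finset.sum_sub_distrib, ← Finset.mul_sum, ← Finset.sum_mul,
        h1] at h3
      have := Real.add_one_le_exp (-η * (∑ j ∈ s, q (n + 1) j * L (n + 1) j) + η ^ 2 / 2)
      linarith
    have hstep : ∀ i ∈ s, q (n + 1 + 1) i = q (n + 1) i * Real.exp (-η * L (n + 1) i) / z :=
      fun i hi => hq _ hmem i hi
    have hnn : ∀ i ∈ s, 0 ≤ q (n + 1 + 1) i := by
      intro i hi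
      rw [hstep i hi]
      have := h0 i hi
      positivity
    refine ⟨hnn, ?_, ?_⟩
    · rw [Finset.sum_congr rfl hstep, ← Finset.sum_div]
      exact div_self hzpos.ne'
    · intro i hi
      rw [Finset.sum_Icc_succ_top (by omega), Finset.sum_Icc_succ_top (by omega)]
      have e1 : -η * (∑ t ∈ Finset.Icc 1 n, L t i + L (n + 1) i) =
        -η * (∑ t ∈ Finset.Icc 1 n, L t i) + -η * L (n + 1) i := by ring
      rw [e1, Real.exp_add, ← mul_assoc]
      set m := ∑ j ∈ s, q (n + 1) j * L (n + 1) j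
      set P := ∑ t ∈ Finset.Icc 1 n, ∑ j ∈ s, q t j * L t j
      have e2 : -η * (P + m) + ((n + 1 : ℕ) : ℝ) * (η ^ 2 / 2) =
        (-η * P + n * (η ^ 2 / 2)) + (-η * m + η ^ 2 / 2) := by push_cast; ring
      rw [e2, Real.exp_add]
      have e3 : q (n + 1) i * Real.exp (-η * L (n + 1) i) = q (n + 1 + 1) i * z := by
        rw [hstep i hi]; field_simp
      calc _ ≤ q (n + 1) i * Real.exp (-η * P + n * (η ^ 2 / 2)) * Real.exp (-η * L (n + 1) i) :=
            mul_le_mul_of_nonneg_right (h2 i hi) (Real.exp_pos _).le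
        _ = (q (n + 1) i * Real.exp (-η * L (n + 1) i)) * Real.exp (-η * P + n * (η ^ 2 / 2)) := by
            ring
        _ = q (n + 1 + 1) i * (Real.exp (-η * P + n * (η ^ 2 / 2)) * z) := by rw [e3]; ring
        _ ≤ _ := by
            apply mul_le_mul_of_nonneg_left _ (hnn i hi)
            exact mul_le_mul_of_nonneg_left hzle (Real.exp_pos _).le

lemma aux_mwu {ι : Type*} (s : Finset ι) (T : ℕ) (q L : ℕ → ι → ℝ) (η : ℝ) (hη : 0 < η)
    (hL : ∀ t ∈ Finset.Icc 1 T, (∀ i ∈ s, 0 ≤ q t i) → ∑ i ∈ s, q t i = 1 →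
      ∀ i ∈ s, 0 ≤ L t i ∧ L t i ≤ 1)
    (hq0 : ∀ i ∈ s, 0 ≤ q 1 i) (hq1 : ∑ i ∈ s, q 1 i = 1)
    (hq : ∀ t ∈ Finset.Icc 1 T, ∀ i ∈ s, q (t + 1) i =
      q t i * Real.exp (-η * L t i) / ∑ j ∈ s, q t j * Real.exp (-η * L t j))
    (A : Finset ι) (hA : A ⊆ s) (c B : ℝ) (hc : 0 < c) (hcA : c ≤ ∑ i ∈ A, q 1 i)
    (hB : ∀ i ∈ A, ∑ t ∈ Finset.Icc 1 T, L t i ≤ B) :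
    (∑ t ∈ Finset.Icc 1 T, ∑ j ∈ s, q t j * L t j) - B ≤
      Real.log (1 / c) / η + η * T / 2 := by
  obtain ⟨h0, h1, h2⟩ := aux_mwu_inv s T q L η hη.le hL hq0 hq1 hq T le_rfl
  set P := ∑ t ∈ Finset.Icc 1 T, ∑ j ∈ s, q t j * L t j
  have key : c * Real.exp (-η * B) ≤ Real.exp (-η * P + T * (η ^ 2 / 2)) := by
    calc c * Real.exp (-η * B) ≤ (∑ i ∈ A, q 1 i) * Real.exp (-η * B) :=
          mul_le_mul_of_nonneg_right hcA (Real.exp_pos _).le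
      _ = ∑ i ∈ A, q 1 i * Real.exp (-η * B) := Finset.sum_mul _ _ _
      _ ≤ ∑ i ∈ A, q (T + 1) i * Real.exp (-η * P + T * (η ^ 2 / 2)) := by
          apply Finset.sum_le_sum
          intro i hi
          refine le_trans ?_ (h2 i (hA hi))
          apply mul_le_mul_of_nonneg_left _ (hq0 i (hA hi))
          apply Real.exp_le_exp.2
          nlinarith [hB i hi]
      _ ≤ ∑ i ∈ s, q (T + 1) i * Real.exp (-η * P + T * (η ^ 2 / 2)) := by
          apply Finset.sum_le_sum_of_subset_of_nonneg hA
          intro i hi _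
          exact mul_nonneg (h0 i hi) (Real.exp_pos _).le
      _ = _ := by rw [← Finset.sum_mul, h1, one_mul]
  have hlog := Real.log_le_log (by positivity) key
  rw [Real.log_exp, Real.log_mul hc.ne' (Real.exp_pos _).ne', Real.log_exp] at hlog
  rw [one_div, Real.log_inv]
  have : P - B = η * (P - B) / η := by field_simp
  rw [this]
  have e : -Real.log c / η + η * T / 2 = (-Real.log c + η * (η * T / 2)) / η := by
    field_simp
  rw [e]
  apply div_le_div_of_nonneg_right _ hη.le
  nlinarith

lemma aux_piInd {d : ℕ} (ψ : Matrix (Fin d) (Fin d) ℝ) (f : Fin d → Fin d) :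
    piInd ψ (toMat d f) = ∏ i, ψ i (f i) := by
  simp [piInd, toMat]

lemma aux_sum_piInd {d : ℕ} (ψ : Matrix (Fin d) (Fin d) ℝ) (h : ∀ i, ∑ j, ψ i j = 1) :
    ∑ f, piInd ψ (toMat d f) = 1 := by
  rw [Finset.sum_congr rfl fun f _ => aux_piInd ψ f]
  have := (Finset.prod_univ_sum (fun _ : Fin d => (Finset.univ : Finset (Fin d))) (fun i j => ψ i j))
  rw [Fintype.piFinset_univ] at this
  rw [← this]
  simp [h]

lemma aux_psiK {d : ℕ} (hd : 2 ≤ d) (k : Fin d) :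
    (∀ i j, 0 ≤ psiK d k i j) ∧ (∀ i, ∑ j, psiK d k i j = 1) := by
  have hd' : (2 : ℝ) ≤ d := by exact_mod_cast hd
  have h1 : (0 : ℝ) < (d : ℝ) - 1 := by linarith
  have h2 : (0 : ℝ) ≤ (d : ℝ) - 2 := by linarith
  constructor
  · intro i j
    unfold psiK
    split_ifs <;> positivity
  · intro i
    simp only [psiK, Finset.sum_add_distrib, ← Finset.mul_sum, Finset.sum_ite_eq',
      Finset.mem_univ, if_true, Finset.sum_const, Finset.card_univ, Fintype.card_fin, nsmul_eq_mul]
    field_simp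
    ring

lemma aux_psiSelf {d : ℕ} (hd : 2 ≤ d) :
    (∀ i j, 0 ≤ psiSelf d i j) ∧ (∀ i, ∑ j, psiSelf d i j = 1) := by
  have hd' : (2 : ℝ) ≤ d := by exact_mod_cast hd
  have h1 : (0 : ℝ) < (d : ℝ) - 1 := by linarith
  have h2 : (0 : ℝ) ≤ (d : ℝ) - 2 := by linarith
  constructor
  · intro i j
    unfold psiSelf
    split_ifs <;> positivity
  · intro i
    simp only [psiSelf, Finset.sum_add_distrib, ← Finset.mul_sum, Finset.sum_ite_eq,
      Finset.mem_univ, if_true, Finset.sum_const, Finset.card_univ, Fintype.card_fin, nsmul_eq_mul]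
    field_simp
    ring

lemma aux_piInd_nonneg {d : ℕ} (ψ : Matrix (Fin d) (Fin d) ℝ) (h : ∀ i j, 0 ≤ ψ i j)
    (f : Fin d → Fin d) : 0 ≤ piInd ψ (toMat d f) := by
  rw [aux_piInd]
  exact Finset.prod_nonneg fun i _ => h _ _

lemma aux_prior_nonneg {d : ℕ} (hd : 2 ≤ d) (f : Fin d → Fin d) : 0 ≤ priorPi d (toMat d f) := by
  unfold priorPi
  have h1 := aux_piInd_nonneg _ (aux_psiSelf hd).1 f
  have h2 : 0 ≤ ∑ k : Fin d, piInd (psiK d k) (toMat d f) :=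
    Finset.sum_nonneg fun k _ => aux_piInd_nonneg _ (aux_psiK hd k).1 f
  have h3 : (0 : ℝ) ≤ 1 / (2 * (d : ℝ)) := by positivity
  exact add_nonneg (mul_nonneg h3 h2) (mul_nonneg (by norm_num) h1)

lemma aux_prior_sum {d : ℕ} (hd : 2 ≤ d) : ∑ f, priorPi d (toMat d f) = 1 := by
  unfold priorPi
  rw [Finset.sum_add_distrib, ← Finset.mul_sum, ← Finset.mul_sum, Finset.sum_comm,
    aux_sum_piInd _ (aux_psiSelf hd).2]
  rw [Finset.sum_congr rfl fun k _ => aux_sum_piInd _ (aux_psiK hd k).2]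
  have : (d : ℝ) ≠ 0 := by positivity
  simp
  field_simp
  norm_num

lemma aux_pow_quarter {d : ℕ} (hd : 2 ≤ d) : (1 / 4 : ℝ) ≤ (1 - 1 / (d : ℝ)) ^ d := by
  -- Bernoulli at half the exponent
  have hd' : (2 : ℝ) ≤ d := by exact_mod_cast hd
  have hb : (1 / 2 : ℝ) ≤ (1 - 1 / (d : ℝ)) ^ ((d : ℝ) / 2) := by
    have := one_add_mul_self_le_rpow_one_add (s := -(1 / (d : ℝ)))
      (by rw [neg_le_neg_iff, div_le_one (by linarith)]; linarith) (p := (d : ℝ) / 2) (by linarith)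
    have e : 1 + (d : ℝ) / 2 * -(1 / (d : ℝ)) = 1 / 2 := by field_simp; norm_num
    rw [e] at this
    simpa [sub_eq_add_neg] using this
  have hnn : (0 : ℝ) ≤ 1 - 1 / (d : ℝ) := by
    rw [sub_nonneg, div_le_one (by linarith)]; linarith
  have e2 : (1 - 1 / (d : ℝ)) ^ d = ((1 - 1 / (d : ℝ)) ^ ((d : ℝ) / 2)) ^ 2 := by
    rw [← Real.rpow_natCast, ← Real.rpow_natCast, ← Real.rpow_mul hnn]
    congr 1
    push_cast; ring
  rw [e2]
  nlinarith

lemma aux_prior_const {d : ℕ} (hd : 2 ≤ d) (k : Fin d) :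
    1 / (8 * (d : ℝ)) ≤ priorPi d (toMat d (fun _ => k)) := by
  have hd' : (2 : ℝ) ≤ d := by exact_mod_cast hd
  unfold priorPi
  have h1 := aux_piInd_nonneg _ (aux_psiSelf hd).1 (fun _ => k)
  have h2 : piInd (psiK d k) (toMat d (fun _ => k)) ≤
      ∑ k' : Fin d, piInd (psiK d k') (toMat d (fun _ => k)) :=
    Finset.single_le_sum (f := fun k' => piInd (psiK d k') (toMat d (fun _ => k)))
      (fun k' _ => aux_piInd_nonneg _ (aux_psiK hd k').1 _) (Finset.mem_univ k)
  have h3 : piInd (psiK d k) (toMat d (fun _ => k)) = (1 - 1 / (d : ℝ)) ^ d := by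
    rw [aux_piInd]
    simp only [psiK, if_true, Finset.prod_const, Finset.card_univ, Fintype.card_fin]
    congr 1
    have : (0 : ℝ) < (d : ℝ) - 1 := by linarith
    field_simp
    ring
  have h4 := aux_pow_quarter hd
  rw [h3] at h2
  have h5 : 1 / (2 * (d : ℝ)) * (1 / 4) ≤
      1 / (2 * (d : ℝ)) * ∑ k' : Fin d, piInd (psiK d k') (toMat d (fun _ => k)) :=
    mul_le_mul_of_nonneg_left (h4.trans h2) (by positivity)
  have e : 1 / (8 * (d : ℝ)) = 1 / (2 * (d : ℝ)) * (1 / 4) := by field_simp; norm_num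
  rw [e]
  linarith

lemma aux_lossInner_toMat {d : ℕ} (f : Fin d → Fin d) (p l : Fin d → ℝ) :
    lossInner (toMat d f) p l = ∑ i, p i * l (f i) := by
  simp [lossInner, toMat]

lemma aux_loss_bd {d : ℕ} (f : Fin d → Fin d) (p l : Fin d → ℝ) (hp : InSimplex d p)
    (hl : ∀ i, 0 ≤ l i ∧ l i ≤ 1) :
    0 ≤ lossInner (toMat d f) p l ∧ lossInner (toMat d f) p l ≤ 1 := by
  rw [aux_lossInner_toMat]
  constructor
  · exact Finset.sum_nonneg fun i _ => mul_nonneg (hp.1 i) (hl _).1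
  · rw [← hp.2]
    exact Finset.sum_le_sum fun i _ => mul_le_of_le_one_right (hp.1 i) (hl _).2

lemma aux_lossInner_mix {d : ℕ} (q : (Fin d → Fin d) → ℝ) (p l : Fin d → ℝ) :
    lossInner (mixMat d q) p l = ∑ f, q f * lossInner (toMat d f) p l := by
  simp only [lossInner, mixMat, Finset.mul_sum, Finset.sum_mul]
  symm
  rw [Finset.sum_comm]
  refine Finset.sum_congr rfl fun i _ => ?_
  rw [Finset.sum_comm]
  refine Finset.sum_congr rfl fun j _ => Finset.sum_congr rfl fun f _ => ?_
  ring

lemma aux_mix_bd {d : ℕ} (q : (Fin d → Fin d) → ℝ) (hq : ∀ f, 0 ≤ q f) (hq1 : ∑ f, q f = 1)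
    (p l : Fin d → ℝ) (hp : InSimplex d p) (hl : ∀ i, 0 ≤ l i ∧ l i ≤ 1) :
    0 ≤ lossInner (mixMat d q) p l ∧ lossInner (mixMat d q) p l ≤ 1 := by
  rw [aux_lossInner_mix]
  constructor
  · exact Finset.sum_nonneg fun f _ => mul_nonneg (hq f) (aux_loss_bd f p l hp hl).1
  · rw [← hq1]
    exact Finset.sum_le_sum fun f _ => mul_le_of_le_one_right (hq f) (aux_loss_bd f p l hp hl).2

lemma aux_logM {d : ℕ} (hd : 2 ≤ d) :
    1 ≤ Nat.clog 2 d ∧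
    Real.log (2 * Nat.clog 2 d : ℝ) ≤ 2 * (1 + Real.log (1 + Real.log d)) := by
  have h1 : 1 ≤ Nat.clog 2 d := Nat.clog_pos (by norm_num) hd
  refine ⟨h1, ?_⟩
  have hd' : (2 : ℝ) ≤ d := by exact_mod_cast hd
  have hl2 := Real.log_two_gt_d9
  have hl2' := Real.log_two_lt_d9
  have hld : 0 ≤ Real.log d := Real.log_nonneg (by linarith)
  have h2 : (2 : ℝ) ^ (Nat.clog 2 d - 1) ≤ d := by
    have := Nat.pow_pred_clog_lt_self (b := 2) (by norm_num) (x := d) (by omega)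
    exact_mod_cast this.le
  have h3 := Real.log_le_log (by positivity) h2
  rw [Real.log_pow, Nat.cast_sub h1] at h3
  have h4 : (Nat.clog 2 d : ℝ) ≤ 2 * (1 + Real.log d) := by
    have : (1 : ℝ) ≤ Nat.clog 2 d := by exact_mod_cast h1
    push_cast at h3
    nlinarith
  have h5 : Real.log (2 * Nat.clog 2 d : ℝ) ≤ Real.log (4 * (1 + Real.log d)) := by
    apply Real.log_le_log
    · have : (1 : ℝ) ≤ Nat.clog 2 d := by exact_mod_cast h1
      linarith
    · linarith
  rw [Real.log_mul (x := 4) (by norm_num) (by linarith)] at h5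
  have h6 : Real.log 4 = 2 * Real.log 2 := by
    rw [show (4 : ℝ) = 2 ^ 2 by norm_num, Real.log_pow]; norm_num
  have h7 : 0 ≤ Real.log (1 + Real.log d) := Real.log_nonneg (by linarith)
  linarith

lemma aux_exists_h {d : ℕ} (hd : 2 ≤ d) (ε : ℝ) (h1 : 1 / (d : ℝ) ≤ ε) (h2 : ε ≤ 1) :
    ∃ h ∈ Finset.Icc 1 (2 * Nat.clog 2 d),
      (2 : ℝ) ^ h ≤ Real.log (8 / ε) ∧ Real.log (8 / ε) ≤ 2 * 2 ^ h := by
  have hd' : (2 : ℝ) ≤ d := by exact_mod_cast hd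
  have hε : 0 < ε := lt_of_lt_of_le (by positivity) h1
  have hl2 := Real.log_two_gt_d9
  have hl2' := Real.log_two_lt_d9
  have h8 : Real.log 8 = 3 * Real.log 2 := by
    rw [show (8 : ℝ) = 2 ^ 3 by norm_num, Real.log_pow]; norm_num
  have hlo : 2 ≤ Real.log (8 / ε) := by
    have : Real.log 8 ≤ Real.log (8 / ε) := by
      apply Real.log_le_log (by norm_num)
      rw [le_div_iff₀ hε]; linarith
    linarith
  have hhi : Real.log (8 / ε) < (d : ℝ) ^ 2 := by
    have : Real.log (8 / ε) ≤ Real.log (8 * d) := by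
      apply Real.log_le_log (by positivity)
      rw [div_le_iff₀ hε]
      rw [div_le_iff₀ (by linarith)] at h1
      nlinarith
    rw [Real.log_mul (by norm_num) (by linarith)] at this
    have := Real.log_le_sub_one_of_pos (x := d) (by linarith)
    nlinarith
  obtain ⟨n, hn1, hn2⟩ := exists_nat_pow_near (x := Real.log (8 / ε)) (y := 2) (by linarith)
    (by norm_num)
  refine ⟨n, ?_, hn1, ?_⟩
  · rw [Finset.mem_Icc]
    constructor
    · by_contra hc
      have : n = 0 := by omega
      subst this
      norm_num at hn2
      linarith
    · have hc : (d : ℝ) ≤ 2 ^ Nat.clog 2 d := by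
        exact_mod_cast Nat.le_pow_clog (by norm_num) d
      have : (2 : ℝ) ^ n < 2 ^ (2 * Nat.clog 2 d) := by
        rw [mul_comm, pow_mul]
        have : (d : ℝ) ^ 2 ≤ (2 ^ Nat.clog 2 d) ^ 2 := by gcongr
        linarith
      exact ((pow_lt_pow_iff_right₀ (by norm_num)).1 this).le
  · rw [pow_succ] at hn2
    linarith

lemma aux_base_num (x T y : ℝ) (hy : 1 ≤ y) (hT : 1 ≤ T) (h1 : y ≤ x) (h2 : x ≤ 2 * y) :
    x / Real.sqrt (y / T) + Real.sqrt (y / T) * T / 2 ≤ 2 * Real.sqrt (T * x) := by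
  have hs : Real.sqrt (y / T) = Real.sqrt (T * y) / T := by
    rw [Real.sqrt_eq_iff_mul_self_eq (by positivity) (by positivity)]
    have := Real.mul_self_sqrt (show 0 ≤ T * y by positivity)
    rw [div_mul_div_comm, this]
    field_simp
  have hp : 0 < Real.sqrt (T * y) := Real.sqrt_pos.2 (by positivity)
  have hp2 := Real.sq_sqrt (show 0 ≤ T * y by positivity)
  have hx2 := Real.sq_sqrt (show 0 ≤ T * x by nlinarith)
  rw [hs]
  have hx : x / (Real.sqrt (T * y) / T) = T * x / Real.sqrt (T * y) := by field_simp
  have e : Real.sqrt (T * y) / T * T / 2 = Real.sqrt (T * y) / 2 := by field_simp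
  rw [hx, e]
  set a := Real.sqrt (T * y)
  set b := Real.sqrt (T * x)
  have hb : 0 ≤ b := Real.sqrt_nonneg _
  have hab : a ≤ b := Real.sqrt_le_sqrt (by nlinarith)
  have hba : b ^ 2 ≤ 2 * a ^ 2 := by rw [hp2, hx2]; nlinarith
  rw [← hx2]
  have hba' : b ≤ 3 / 2 * a := by
    apply abs_le_of_sq_le_sq' _ (by linarith) |>.2
    nlinarith
  have : b ^ 2 / a ≤ 3 / 2 * b := by
    rw [div_le_iff₀ hp]
    nlinarith
  linarith

lemma aux_meta_num (x T : ℝ) (hT : 1 ≤ T) (hx : 0 < x) :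
    x / Real.sqrt (x / T) + Real.sqrt (x / T) * T / 2 ≤ 2 * Real.sqrt (T * x) := by
  have hs : Real.sqrt (x / T) = Real.sqrt (T * x) / T := by
    rw [Real.sqrt_eq_iff_mul_self_eq (by positivity) (by positivity)]
    have := Real.mul_self_sqrt (show 0 ≤ T * x by positivity)
    rw [div_mul_div_comm, this]
    field_simp
  have hp : 0 < Real.sqrt (T * x) := Real.sqrt_pos.2 (by positivity)
  have hp2 := Real.sq_sqrt (show 0 ≤ T * x by positivity)
  rw [hs]
  have hx : x / (Real.sqrt (T * x) / T) = T * x / Real.sqrt (T * x) := by field_simp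
  have e : Real.sqrt (T * x) / T * T / 2 = Real.sqrt (T * x) / 2 := by field_simp
  rw [hx, e, Real.div_sqrt]
  linarith

/-- The meta MWU algorithm of Statement 10 achieves near-optimal ε-quantile
regret: there is a universal `C > 0` such that for all `d ≥ 2`, `T ≥ 1`, losses in `[0,1]^d`,
`ε ∈ [1/d, 1]`, and any expert `iε` whose cumulative loss is the `⌈εd⌉`-th smallest,
`Σ_t ⟨p_t, ℓ_t⟩ − Σ_t ℓ_{t,iε} ≤ C (√(T log(2/ε)) + √(T(1 + log(1 + log d))))`. -/
theorem stmt12 :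
    ∃ C > (0 : ℝ),
      ∀ (d T : ℕ), 2 ≤ d → 1 ≤ T →
      ∀ (ℓ p : ℕ → Fin d → ℝ) (qB : ℕ → ℕ → (Fin d → Fin d) → ℝ) (w : ℕ → ℕ → ℝ),
        (∀ t ∈ Finset.Icc 1 T, ∀ i, 0 ≤ ℓ t i ∧ ℓ t i ≤ 1) →
        (∀ t ∈ Finset.Icc 1 T, InSimplex d (p t)) →
        (∀ h ∈ Finset.Icc 1 (2 * Nat.clog 2 d), ∀ f, qB h 1 f = priorPi d (toMat d f)) →
        (∀ h ∈ Finset.Icc 1 (2 * Nat.clog 2 d), ∀ t ∈ Finset.Icc 1 T, ∀ f,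
          qB h (t + 1) f =
            qB h t f *
                Real.exp (-Real.sqrt ((2 : ℝ) ^ h / (T : ℝ)) *
                  lossInner (toMat d f) (p t) (ℓ t)) /
              ∑ g, qB h t g *
                Real.exp (-Real.sqrt ((2 : ℝ) ^ h / (T : ℝ)) *
                  lossInner (toMat d g) (p t) (ℓ t))) →
        (∀ h ∈ Finset.Icc 1 (2 * Nat.clog 2 d), w 1 h = 1 / (2 * Nat.clog 2 d : ℝ)) →
        (∀ t ∈ Finset.Icc 1 T, ∀ h ∈ Finset.Icc 1 (2 * Nat.clog 2 d),
          w (t + 1) h =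
            w t h *
                Real.exp (-Real.sqrt (Real.log (2 * Nat.clog 2 d : ℝ) / (T : ℝ)) *
                  lossInner (mixMat d (qB h t)) (p t) (ℓ t)) /
              ∑ h' ∈ Finset.Icc 1 (2 * Nat.clog 2 d), w t h' *
                Real.exp (-Real.sqrt (Real.log (2 * Nat.clog 2 d : ℝ) / (T : ℝ)) *
                  lossInner (mixMat d (qB h' t)) (p t) (ℓ t))) →
        (∀ t ∈ Finset.Icc 1 T, ∀ i,
          p t i = ∑ j, (∑ h ∈ Finset.Icc 1 (2 * Nat.clog 2 d),
            w t h * mixMat d (qB h t) j i) * p t j) →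
        ∀ ε : ℝ, 1 / (d : ℝ) ≤ ε → ε ≤ 1 →
        ∀ iε : Fin d,
          -- `iε` has the `⌈εd⌉`-th smallest cumulative loss
          ⌈ε * d⌉₊ ≤ (Finset.univ.filter fun i : Fin d =>
              (∑ t ∈ Finset.Icc 1 T, ℓ t i) ≤ ∑ t ∈ Finset.Icc 1 T, ℓ t iε).card →
          (Finset.univ.filter fun i : Fin d =>
              (∑ t ∈ Finset.Icc 1 T, ℓ t i) < ∑ t ∈ Finset.Icc 1 T, ℓ t iε).card < ⌈ε * d⌉₊ →
          (∑ t ∈ Finset.Icc 1 T, ∑ i, p t i * ℓ t i) - (∑ t ∈ Finset.Icc 1 T, ℓ t iε) ≤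
            C * (Real.sqrt ((T : ℝ) * Real.log (2 / ε)) +
              Real.sqrt ((T : ℝ) * (1 + Real.log (1 + Real.log d)))) := by
  refine ⟨4, by norm_num, ?_⟩
  intro d T hd hT ℓ p qB w hl hp hq1 hq hw1 hw hstat ε hε1 hε2 iε hcard _
  have hd' : (2 : ℝ) ≤ d := by exact_mod_cast hd
  have hT' : (1 : ℝ) ≤ T := by exact_mod_cast hT
  have hε : 0 < ε := lt_of_lt_of_le (by positivity) hε1
  obtain ⟨hM1, hM2⟩ := aux_logM hd
  have hM1' : (1 : ℝ) ≤ Nat.clog 2 d := by exact_mod_cast hM1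
  have hMcast : (2 * Nat.clog 2 d : ℝ) = ((2 * Nat.clog 2 d : ℕ) : ℝ) := by push_cast; ring
  have hMlog : 0 < Real.log (2 * Nat.clog 2 d : ℝ) := Real.log_pos (by linarith)
  -- invariants of base learners
  have hinv : ∀ h ∈ Finset.Icc 1 (2 * Nat.clog 2 d), ∀ t ∈ Finset.Icc 1 T,
      (∀ f, 0 ≤ qB h t f) ∧ ∑ f, qB h t f = 1 := by
    intro h hh t ht
    have := aux_mwu_inv Finset.univ T (qB h) (fun t f => lossInner (toMat d f) (p t) (ℓ t))
      (Real.sqrt ((2 : ℝ) ^ h / (T : ℝ))) (Real.sqrt_nonneg _)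
      (fun t ht _ _ f _ => aux_loss_bd f _ _ (hp t ht) (hl t ht))
      (fun f _ => by rw [hq1 h hh]; exact aux_prior_nonneg hd f)
      (by rw [Finset.sum_congr rfl fun f _ => hq1 h hh f]; exact aux_prior_sum hd)
      (fun t ht f _ => hq h hh t ht f) (t - 1) (by have := Finset.mem_Icc.1 ht; omega)
    have e : t - 1 + 1 = t := by have := Finset.mem_Icc.1 ht; omega
    rw [e] at this
    exact ⟨fun f => this.1 f (Finset.mem_univ f), this.2.1⟩
  obtain ⟨h, hh, hh1, hh2⟩ := aux_exists_h hd ε hε1 hε2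
  -- base learner
  have hbase := aux_mwu Finset.univ T (qB h) (fun t f => lossInner (toMat d f) (p t) (ℓ t))
      (Real.sqrt ((2 : ℝ) ^ h / (T : ℝ))) (Real.sqrt_pos.2 (by positivity))
      (fun t ht _ _ f _ => aux_loss_bd f _ _ (hp t ht) (hl t ht))
      (fun f _ => by rw [hq1 h hh]; exact aux_prior_nonneg hd f)
      (by rw [Finset.sum_congr rfl fun f _ => hq1 h hh f]; exact aux_prior_sum hd)
      (fun t ht f _ => hq h hh t ht f)
      ((Finset.univ.filter fun i : Fin d =>
              (∑ t ∈ Finset.Icc 1 T, ℓ t i) ≤ ∑ t ∈ Finset.Icc 1 T, ℓ t iε).image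
                (fun k => (fun _ : Fin d => k)))
      (Finset.subset_univ _) (ε / 8) (∑ t ∈ Finset.Icc 1 T, ℓ t iε) (by positivity)
      (by
        rw [Finset.sum_image (by
          intro a _ b _ hab
          exact congrFun hab iε)]
        have h1 : (ε * d : ℝ) ≤ ((Finset.univ.filter fun i : Fin d =>
              (∑ t ∈ Finset.Icc 1 T, ℓ t i) ≤ ∑ t ∈ Finset.Icc 1 T, ℓ t iε).card : ℝ) :=
          (Nat.le_ceil _).trans (by exact_mod_cast hcard)
        have h2 := Finset.card_nsmul_le_sum (Finset.univ.filter fun i : Fin d =>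
              (∑ t ∈ Finset.Icc 1 T, ℓ t i) ≤ ∑ t ∈ Finset.Icc 1 T, ℓ t iε)
              (fun k => qB h 1 (fun _ => k)) (1 / (8 * (d : ℝ)))
              (fun k _ => by rw [hq1 h hh]; exact aux_prior_const hd k)
        refine le_trans ?_ h2
        rw [nsmul_eq_mul]
        have e : ε / 8 = ε * d * (1 / (8 * (d : ℝ))) := by field_simp
        rw [e]
        exact mul_le_mul_of_nonneg_right h1 (by positivity))
      (by
        intro f hf
        obtain ⟨k, hk, rfl⟩ := Finset.mem_image.1 hf
        refine le_trans (le_of_eq ?_) (Finset.mem_filter.1 hk).2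
        refine Finset.sum_congr rfl fun t ht => ?_
        simp only [aux_lossInner_toMat]
        rw [← Finset.sum_mul, (hp t ht).2, one_mul])
  -- meta learner
  have hmeta := aux_mwu (Finset.Icc 1 (2 * Nat.clog 2 d)) T w
      (fun t h => lossInner (mixMat d (qB h t)) (p t) (ℓ t))
      (Real.sqrt (Real.log (2 * Nat.clog 2 d : ℝ) / (T : ℝ))) (Real.sqrt_pos.2 (by positivity))
      (fun t ht _ _ h hh => aux_mix_bd _ (hinv h hh t ht).1 (hinv h hh t ht).2 _ _
        (hp t ht) (hl t ht))
      (fun h hh => by rw [hw1 h hh]; positivity)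
      (by
        rw [Finset.sum_congr rfl hw1, Finset.sum_const, Nat.card_Icc, nsmul_eq_mul,
          Nat.add_sub_cancel, ← hMcast]
        field_simp)
      (fun t ht h hh => hw t ht h hh)
      {h} (Finset.singleton_subset_iff.2 hh) (1 / (2 * Nat.clog 2 d : ℝ))
      (∑ t ∈ Finset.Icc 1 T, lossInner (mixMat d (qB h t)) (p t) (ℓ t)) (by positivity)
      (by rw [Finset.sum_singleton, hw1 h hh])
      (by intro i hi; rw [Finset.mem_singleton.1 hi])
  -- stationarity
  have hs : ∀ t ∈ Finset.Icc 1 T, ∑ i, p t i * ℓ t i =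
      ∑ h ∈ Finset.Icc 1 (2 * Nat.clog 2 d), w t h *
        lossInner (mixMat d (qB h t)) (p t) (ℓ t) := by
    intro t ht
    have : ∀ i, p t i * ℓ t i = ∑ j, ∑ h ∈ Finset.Icc 1 (2 * Nat.clog 2 d),
        w t h * (mixMat d (qB h t) j i * (p t j * ℓ t i)) := by
      intro i
      conv_lhs => rw [hstat t ht i]
      rw [Finset.sum_mul]
      refine Finset.sum_congr rfl fun j _ => ?_
      rw [Finset.sum_mul, Finset.sum_mul]
      refine Finset.sum_congr rfl fun h _ => ?_
      ring
    rw [Finset.sum_congr rfl fun i _ => this i, Finset.sum_comm]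
    simp only [lossInner, Finset.mul_sum]
    symm
    rw [Finset.sum_comm]
    refine Finset.sum_congr rfl fun j _ => ?_
    rw [Finset.sum_comm]
  rw [Finset.sum_congr rfl hs]
  have hmix : ∑ t ∈ Finset.Icc 1 T, ∑ f, qB h t f * lossInner (toMat d f) (p t) (ℓ t) =
      ∑ t ∈ Finset.Icc 1 T, lossInner (mixMat d (qB h t)) (p t) (ℓ t) :=
    Finset.sum_congr rfl fun t _ => (aux_lossInner_mix _ _ _).symm
  rw [hmix, one_div_div] at hbase
  rw [one_div_one_div] at hmeta
  have hb2 := aux_base_num (Real.log (8 / ε)) T (2 ^ h) (one_le_pow₀ (by norm_num)) hT' hh1 hh2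
  have hm2 := aux_meta_num (Real.log (2 * Nat.clog 2 d : ℝ)) T hT' hMlog
  have hb3 : Real.sqrt (T * Real.log (8 / ε)) ≤ 2 * Real.sqrt (T * Real.log (2 / ε)) := by
    rw [show (2 : ℝ) = Real.sqrt 4 by
      rw [show (4 : ℝ) = 2 ^ 2 by norm_num, Real.sqrt_sq (by norm_num)],
      ← Real.sqrt_mul (by norm_num)]
    rw [show Real.sqrt 4 = 2 by
      rw [show (4 : ℝ) = 2 ^ 2 by norm_num, Real.sqrt_sq (by norm_num)]]
    apply Real.sqrt_le_sqrt
    have hl2 : 0 < Real.log 2 := Real.log_pos (by norm_num)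
    have hle : Real.log ε ≤ 0 := Real.log_nonpos hε.le hε2
    have : Real.log (8 / ε) ≤ 4 * Real.log (2 / ε) := by
      rw [Real.log_div (by norm_num) hε.ne', Real.log_div (by norm_num) hε.ne',
        show (8 : ℝ) = 2 ^ 3 by norm_num, Real.log_pow]
      push_cast
      linarith
    nlinarith
  have hm3 : Real.sqrt (T * Real.log (2 * Nat.clog 2 d : ℝ)) ≤
      2 * Real.sqrt (T * (1 + Real.log (1 + Real.log d))) := by
    have h0 : 0 ≤ T * (1 + Real.log (1 + Real.log d)) := by
      have : 0 < 1 + Real.log (1 + Real.log d) := by linarith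
      positivity
    have h1 : T * Real.log (2 * Nat.clog 2 d : ℝ) ≤
        2 ^ 2 * (T * (1 + Real.log (1 + Real.log d))) := by
      have := mul_le_mul_of_nonneg_left hM2 (show (0 : ℝ) ≤ T by linarith)
      linarith
    refine (Real.sqrt_le_sqrt h1).trans (le_of_eq ?_)
    rw [Real.sqrt_mul (by norm_num), Real.sqrt_sq (by norm_num)]
  linarith
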